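/- arXiv:1805.03488 — 2 statements merged into one kernel-verified Lean document; each statement's English description precedes it below -/
import Mathlib

section
/- Let r ∈ ℕ, let G be a finite simple graph, and let σ be a vertex ordering of G. For each vertex u, let d(u) be the σ-smallest vertex of WReach_r[G,σ,u], and set D = {d(u) : u ∈ V(G)}. Then D is a distance-r dominating set of G and |D| ≤ wcol_{2r}(G,σ) · dom_r(G). -/
/-- `WReach G σ r v` is the set of vertices weakly `r`-reachable from `v` in the vertex
ordering `σ`: those `u` with `σ u ≤ σ v` admitting a path of length at most `r` from `v`
to `u` all of whose internal vertices are larger than `u` in `σ`. -/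
def WReach {V : Type} (G : SimpleGraph V) (σ : V → ℕ) (r : ℕ) (v : V) : Set V :=
  {u | σ u ≤ σ v ∧ ∃ p : G.Walk v u, p.IsPath ∧ p.length ≤ r ∧
        ∀ w ∈ p.support, w ≠ v → w ≠ u → σ u < σ w}

/-- The weak `r`-coloring number `wcol_r(G,σ)` of a vertex ordering `σ`:
the maximum over vertices `v` of `|WReach_r[G,σ,v]|`. -/
noncomputable def wcolOrd {V : Type} [Fintype V] (G : SimpleGraph V) (σ : V → ℕ) (r : ℕ) : ℕ :=
  Finset.univ.sup fun v => (WReach G σ r v).ncard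

/-- `D` is a distance-`r` dominating set of `G`: every vertex is at distance at most `r`
from some vertex of `D`. -/
def IsDistDomSet {V : Type} (G : SimpleGraph V) (r : ℕ) (D : Set V) : Prop :=
  ∀ v : V, ∃ u ∈ D, ∃ p : G.Walk u v, p.length ≤ r

/-- `dom_r(G)`: the minimum size of a distance-`r` dominating set of `G`. -/
noncomputable def domNum {V : Type} (G : SimpleGraph V) (r : ℕ) : ℕ :=
  sInf {k | ∃ D : Set V, IsDistDomSet G r D ∧ D.ncard = k}

theorem mem_WReach_of_walk {V : Type} (G : SimpleGraph V) (σ : V → ℕ)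
    (hσ : Function.Injective σ) (r : ℕ) {v u : V} (p : G.Walk v u) (hp : p.length ≤ r)
    (h : ∀ w ∈ p.support, σ u ≤ σ w) : u ∈ WReach G σ r v := by
  classical
  refine ⟨h v p.start_mem_support, p.bypass, p.bypass_isPath,
    p.length_bypass_le.trans hp, ?_⟩
  intro w hw _ hwu
  exact lt_of_le_of_ne (h w (p.support_bypass_subset hw)) fun e => hwu (hσ e).symm

theorem dfun_mem_WReach {V : Type} (G : SimpleGraph V) (σ : V → ℕ)
    (hσ : Function.Injective σ) (r : ℕ) (d u m : V) (hd : d ∈ WReach G σ r u)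
    (hmin : ∀ w ∈ WReach G σ r u, σ d ≤ σ w) (q : G.Walk u m) (hq : q.length ≤ r) :
    d ∈ WReach G σ (2 * r) m := by
  classical
  obtain ⟨hdu, p, -, hpl, hp⟩ := hd
  obtain ⟨z, hz, hzmin⟩ := Finset.exists_min_image q.support.toFinset σ
    ⟨u, by simp⟩
  rw [List.mem_toFinset] at hz
  have hzr : z ∈ WReach G σ r u := by
    refine mem_WReach_of_walk G σ hσ r (q.takeUntil z hz)
      ((q.length_takeUntil_le hz).trans hq) fun w hw => ?_
    exact hzmin w (List.mem_toFinset.2 (q.support_takeUntil_subset_support hz hw))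
  refine mem_WReach_of_walk G σ hσ (2 * r) (q.reverse.append p) ?_ ?_
  · simp only [SimpleGraph.Walk.length_append, SimpleGraph.Walk.length_reverse]
    omega
  · intro w hw
    rw [SimpleGraph.Walk.mem_support_append_iff, SimpleGraph.Walk.support_reverse,
      List.mem_reverse] at hw
    rcases hw with hw | hw
    · exact (hmin z hzr).trans (hzmin w (List.mem_toFinset.2 hw))
    · by_cases h1 : w = u
      · exact h1 ▸ hdu
      by_cases h2 : w = d
      · rw [h2]
      · exact (hp w hw h1 h2).le

/-- Let `σ` be a vertex ordering of `G`. For each vertex `u` let `dfun u` be the `σ`-smallest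
vertex of `WReach_r[G,σ,u]`. Then `D = {dfun u : u ∈ V(G)}` is a distance-`r` dominating set
of `G` with `|D| ≤ wcol_{2r}(G,σ) · dom_r(G)`. -/
theorem stmt14 {V : Type} [Fintype V] (G : SimpleGraph V) (σ : V → ℕ)
    (hσ : Function.Injective σ) (r : ℕ) (dfun : V → V)
    (hdfun : ∀ u : V, dfun u ∈ WReach G σ r u ∧ ∀ w ∈ WReach G σ r u, σ (dfun u) ≤ σ w) :
    IsDistDomSet G r (Set.range dfun) ∧
      (Set.range dfun).ncard ≤ wcolOrd G σ (2 * r) * domNum G r := by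
  classical
  refine ⟨fun v => ?_, ?_⟩
  · obtain ⟨_, p, -, hpl, -⟩ := (hdfun v).1
    exact ⟨dfun v, ⟨v, rfl⟩, p.reverse, by simpa using hpl⟩
  · have hne : {k | ∃ D : Set V, IsDistDomSet G r D ∧ D.ncard = k}.Nonempty :=
      ⟨_, Set.univ, fun v => ⟨v, trivial, SimpleGraph.Walk.nil, by simp⟩, rfl⟩
    obtain ⟨M, hM, hMc⟩ := Nat.sInf_mem hne
    change M.ncard = domNum G r at hMc
    rw [← hMc, mul_comm, Set.ncard_eq_toFinset_card' M]
    have hsub : Set.range dfun ⊆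
        ((M.toFinset.biUnion fun m => (WReach G σ (2 * r) m).toFinset : Finset V) : Set V) := by
      rintro _ ⟨u, rfl⟩
      obtain ⟨m, hm, q, hq⟩ := hM u
      have := dfun_mem_WReach G σ hσ r (dfun u) u m (hdfun u).1 (hdfun u).2 q.reverse
        (by simpa using hq)
      simp only [Finset.coe_biUnion, Set.mem_iUnion, Finset.mem_coe, Set.mem_toFinset]
      exact ⟨m, hm, this⟩
    refine (Set.ncard_le_ncard hsub (Finset.finite_toSet _)).trans ?_
    rw [Set.ncard_coe_finset]
    refine Finset.card_biUnion_le_card_mul _ _ _ fun m _ => ?_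
    rw [← Set.ncard_eq_toFinset_card']
    exact Finset.le_sup (f := fun v => (WReach G σ (2 * r) v).ncard) (Finset.mem_univ m)
end

section
/- Let d ∈ ℕ, let Λ be a finite label set, let k ≥ 1, and let φ(x_1,…,x_k) = ∃y ψ(x_1,…,x_k,y), where ψ is an lcd-reduced formula over {parent} ∪ Λ. Then there exist a finite label set Λ̂ and an lcd-reduced formula φ̂(x_1,…,x_k) over {parent} ∪ Λ̂ such that for every Λ-labeled forest 𝕋 of depth at most d there is a Λ̂-relabeling 𝕊 of 𝕋 with φ(𝕋) = φ̂(𝕊), i.e., a k-tuple of nodes satisfies φ in 𝕋 if and only if it satisfies φ̂ in 𝕊. -/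
/-- `u` is an ancestor of `v` with respect to the parent relation `P` (`P x y` meaning
"`x` is the parent of `y`"): `u` is reachable from `v` by repeatedly passing to parents,
`v` itself included. -/
def ancestorRel {M : Type} (P : M → M → Prop) (u v : M) : Prop :=
  Relation.ReflTransGen (fun a b => P b a) v u

/-- `P` is the parent relation of a rooted forest of depth at most `d`: every node has at
most one parent, there are no cycles when passing to parents, and every node has a finite
set of at most `d` ancestors (each node counting as its own ancestor). -/
def IsForestParentDepthLE {M : Type} (P : M → M → Prop) (d : ℕ) : Prop :=
  (∀ x y z, P x z → P y z → x = y) ∧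
  (∀ x : M, ¬ Relation.TransGen (fun a b => P b a) x x) ∧
  (∀ v : M, {u | ancestorRel P u v}.Finite ∧ {u | ancestorRel P u v}.ncard ≤ d)

/-- lcd-reduced formulas over the vocabulary `{parent} ∪ Λ` with free variables
`x_1, …, x_k`: boolean combinations of unary label atoms `c(x_i)` (for `c ∈ Λ`)
and atoms `lcd_j(x_i, x_{i'})` (for `j ∈ {0,…,d}`). -/
inductive LcdReduced (Λ : Type) (d k : ℕ) : Type
  | label : Λ → Fin k → LcdReduced Λ d k
  | lcd : Fin (d + 1) → Fin k → Fin k → LcdReduced Λ d k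
  | not : LcdReduced Λ d k → LcdReduced Λ d k
  | and : LcdReduced Λ d k → LcdReduced Λ d k → LcdReduced Λ d k
  | or : LcdReduced Λ d k → LcdReduced Λ d k → LcdReduced Λ d k

/-- Realization of an lcd-reduced formula in a `Λ`-labeled forest with universe `M`,
parent relation `P`, and labeling `L : Λ → M → Prop`, under an assignment `v` of the free
variables: the atom `lcd_j(x,y)` is interpreted as "`x` and `y` have exactly `j` common
ancestors". -/
def LcdReduced.Realize {Λ : Type} {d k : ℕ} {M : Type} (P : M → M → Prop)
    (L : Λ → M → Prop) : LcdReduced Λ d k → (Fin k → M) → Prop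
  | .label c i, v => L c (v i)
  | .lcd j i i', v =>
      {u | ancestorRel P u (v i) ∧ ancestorRel P u (v i')}.ncard = (j : ℕ)
  | .not φ, v => ¬ LcdReduced.Realize P L φ v
  | .and φ ψ, v => LcdReduced.Realize P L φ v ∧ LcdReduced.Realize P L ψ v
  | .or φ ψ, v => LcdReduced.Realize P L φ v ∨ LcdReduced.Realize P L ψ v

/-- number of common ancestors -/
noncomputable def lcdN {M : Type} (P : M → M → Prop) (x y : M) : ℕ :=
  {u | ancestorRel P u x ∧ ancestorRel P u y}.ncard

theorem lcdN_comm {M : Type} (P : M → M → Prop) (x y : M) : lcdN P x y = lcdN P y x := by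
  unfold lcdN
  congr 1
  ext u
  exact and_comm

theorem lcdN_le_self {M : Type} {P : M → M → Prop} [Finite M] (x y : M) :
    lcdN P x y ≤ lcdN P x x := by
  unfold lcdN
  apply Set.ncard_le_ncard _ (Set.toFinite _)
  intro u hu
  exact ⟨hu.1, hu.1⟩

theorem lcdN_le {M : Type} {P : M → M → Prop} {d : ℕ} (h : IsForestParentDepthLE P d)
    (x y : M) : lcdN P x y ≤ d := by
  refine le_trans ?_ (h.2.2 x).2
  unfold lcdN
  apply Set.ncard_le_ncard _ (h.2.2 x).1
  intro u hu
  exact hu.1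

theorem lcdN_ultra {M : Type} [Finite M] {P : M → M → Prop} {d : ℕ}
    (h : IsForestParentDepthLE P d) (x y z : M) :
    min (lcdN P x y) (lcdN P y z) ≤ lcdN P x z := by
  have tot : ∀ u u', ancestorRel P u y → ancestorRel P u' y →
      ancestorRel P u u' ∨ ancestorRel P u' u := by
    intro u u' hu hu'
    have := Relation.ReflTransGen.total_of_right_unique
      (r := fun a b => P b a) (fun a b c hb hc => h.1 b c a hb hc) hu hu'
    exact this.symm
  by_cases hs : {u | ancestorRel P u x ∧ ancestorRel P u y} ⊆
      {u | ancestorRel P u y ∧ ancestorRel P u z}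
  · refine le_trans (min_le_left _ _) ?_
    unfold lcdN
    apply Set.ncard_le_ncard _ (Set.toFinite _)
    intro u hu
    exact ⟨hu.1, (hs hu).2⟩
  · refine le_trans (min_le_right _ _) ?_
    obtain ⟨u, hu, hu'⟩ := Set.not_subset.1 hs
    unfold lcdN
    apply Set.ncard_le_ncard _ (Set.toFinite _)
    intro t ht
    refine ⟨?_, ht.2⟩
    rcases tot u t hu.2 ht.1 with h1 | h1
    · exact absurd ⟨hu.2, Relation.ReflTransGen.trans ht.2 h1⟩ hu'
    · exact Relation.ReflTransGen.trans hu.1 h1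

theorem exists_wit {M : Type} (N : M → M → ℕ) (hc : ∀ x y, N x y = N y x)
    (hu : ∀ x y z, min (N x y) (N y z) ≤ N x z) (k l : ℕ) (Y : Set M)
    (hY : Y.Nonempty) :
    ∃ w : Fin (k + 1) → M, (∀ i, w i ∈ Y) ∧ ∀ y ∈ Y, ∀ v : Fin k → M,
      (∀ j, N y (v j) ≤ l) → ∃ i, ∀ j, N (w i) (v j) ≤ l := by
  classical
  have key : ∀ n : ℕ, (∃ w : Fin n → M, (∀ i, w i ∈ Y) ∧ ∀ i j, i ≠ j → N (w i) (w j) ≤ l) ∨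
      (∃ m, m ≤ n ∧ ∃ w : Fin m → M, (∀ i, w i ∈ Y) ∧
        ∀ y ∈ Y, ∃ i, l < N (w i) y) := by
    intro n
    induction n with
    | zero => exact Or.inl ⟨Fin.elim0, fun i => i.elim0, fun i => i.elim0⟩
    | succ n ih =>
      rcases ih with ⟨w, hw, hp⟩ | ⟨m, hm, h⟩
      · by_cases hcov : ∀ y ∈ Y, ∃ i, l < N (w i) y
        · exact Or.inr ⟨n, by omega, w, hw, hcov⟩
        · push Not at hcov
          obtain ⟨y, hy, hn⟩ := hcov
          left
          refine ⟨Fin.cons y w, ?_, ?_⟩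
          · intro i
            refine Fin.cases ?_ (fun i => ?_) i
            · simpa using hy
            · simpa using hw i
          · intro i j
            refine Fin.cases ?_ (fun i => ?_) i <;> refine Fin.cases ?_ (fun j => ?_) j
            · intro h; exact absurd rfl h
            · intro _; simpa [hc] using hn j
            · intro _; simpa using hn i
            · intro h
              simpa using hp i j (fun e => h (by rw [e]))
      · exact Or.inr ⟨m, by omega, h⟩
  rcases key (k + 1) with ⟨w, hw, hp⟩ | ⟨m, hm, w, hw, hcov⟩
  · refine ⟨w, hw, fun y _ v _ => ?_⟩
    by_contra hcon
    push Not at hcon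
    choose f hf using hcon
    obtain ⟨a, b, hab, he⟩ := Fintype.exists_ne_map_eq_of_card_lt f (by simp)
    have h1 := hf a
    have h2 := hf b
    rw [← he, hc] at h2
    have := hu (w a) (v (f a)) (w b)
    have := hp a b hab
    omega
  · obtain ⟨y0, hy0⟩ := hY
    refine ⟨fun i => if h : i.1 < m then w ⟨i, h⟩ else y0, ?_, ?_⟩
    · intro i
      dsimp only
      split_ifs
      · exact hw _
      · exact hy0
    · intro y hy v hv
      obtain ⟨i, hi⟩ := hcov y hy
      refine ⟨⟨i, by omega⟩, fun j => ?_⟩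
      simp only [i.2, dif_pos, Fin.eta]
      have h1 := hu y (w i) (v j)
      have h2 := hv j
      rw [hc y (w i)] at h1
      omega

/-- the atoms -/
abbrev LAtom (Λ : Type) (d k : ℕ) : Type := (Λ × Fin k) ⊕ (Fin (d + 1) × Fin k × Fin k)

/-- atom as a formula -/
def LAtom.toF {Λ : Type} {d k : ℕ} : LAtom Λ d k → LcdReduced Λ d k
  | .inl (c, i) => .label c i
  | .inr (m, i, j) => .lcd m i j

theorem realize_congr {Λ : Type} {d k : ℕ} {M M' : Type} {P : M → M → Prop}
    {P' : M' → M' → Prop} {L : Λ → M → Prop} {L' : Λ → M' → Prop} {v : Fin k → M}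
    {v' : Fin k → M'} (h1 : ∀ c i, L c (v i) ↔ L' c (v' i))
    (h2 : ∀ i j, lcdN P (v i) (v j) = lcdN P' (v' i) (v' j)) (ψ : LcdReduced Λ d k) :
    ψ.Realize P L v ↔ ψ.Realize P' L' v' := by
  induction ψ with
  | label c i => exact h1 c i
  | lcd m i j =>
    change lcdN P (v i) (v j) = m ↔ lcdN P' (v' i) (v' j) = m
    rw [h2]
  | not φ ih => simp only [LcdReduced.Realize, ih]
  | and φ ψ ih1 ih2 => simp only [LcdReduced.Realize, ih1, ih2]
  | or φ ψ ih1 ih2 => simp only [LcdReduced.Realize, ih1, ih2]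

theorem exists_bigOr {Λ : Type} {d k : ℕ} (hk : 1 ≤ k) {ι : Type} (l : List ι)
    (f : ι → LcdReduced Λ d k) :
    ∃ φ : LcdReduced Λ d k, ∀ (M : Type) (P : M → M → Prop) (L : Λ → M → Prop)
      (v : Fin k → M), φ.Realize P L v ↔ ∃ a ∈ l, (f a).Realize P L v := by
  induction l with
  | nil =>
    refine ⟨.and (.lcd 0 ⟨0, hk⟩ ⟨0, hk⟩) (.not (.lcd 0 ⟨0, hk⟩ ⟨0, hk⟩)), ?_⟩
    intro M P L v
    simp [LcdReduced.Realize]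
  | cons a l ih =>
    obtain ⟨φ, hφ⟩ := ih
    refine ⟨.or (f a) φ, ?_⟩
    intro M P L v
    simp [LcdReduced.Realize, hφ]

theorem exists_bigAnd {Λ : Type} {d k : ℕ} (hk : 1 ≤ k) {ι : Type} (l : List ι)
    (f : ι → LcdReduced Λ d k) :
    ∃ φ : LcdReduced Λ d k, ∀ (M : Type) (P : M → M → Prop) (L : Λ → M → Prop)
      (v : Fin k → M), φ.Realize P L v ↔ ∀ a ∈ l, (f a).Realize P L v := by
  obtain ⟨φ, hφ⟩ := exists_bigOr hk l (fun a => .not (f a))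
  refine ⟨.not φ, ?_⟩
  intro M P L v
  simp [LcdReduced.Realize, hφ]

theorem exists_formula {Λ : Type} [Finite Λ] {d k : ℕ} (hk : 1 ≤ k)
    (F : (LAtom Λ d k → Prop) → Prop) :
    ∃ φ : LcdReduced Λ d k, ∀ (M : Type) (P : M → M → Prop) (L : Λ → M → Prop)
      (v : Fin k → M), φ.Realize P L v ↔ F (fun a => a.toF.Realize P L v) := by
  classical
  haveI := Fintype.ofFinite (LAtom Λ d k)
  haveI := Fintype.ofFinite {t : LAtom Λ d k → Prop // F t}
  have h1 : ∀ t : LAtom Λ d k → Prop, ∃ φ : LcdReduced Λ d k,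
      ∀ (M : Type) (P : M → M → Prop) (L : Λ → M → Prop)
      (v : Fin k → M), φ.Realize P L v ↔ t = (fun a => a.toF.Realize P L v) := by
    intro t
    obtain ⟨φ, hφ⟩ := exists_bigAnd hk (Finset.univ : Finset (LAtom Λ d k)).toList
      (fun a => if t a then a.toF else .not a.toF)
    refine ⟨φ, fun M P L v => ?_⟩
    rw [hφ, funext_iff]
    simp only [Finset.mem_toList, Finset.mem_univ, true_implies]
    refine forall_congr' fun a => ?_
    by_cases ht : t a <;> simp [ht, LcdReduced.Realize]
  choose g hg using h1
  obtain ⟨φ, hφ⟩ := exists_bigOr hk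
    (Finset.univ : Finset {t : LAtom Λ d k → Prop // F t}).toList (fun t => g t.1)
  refine ⟨φ, fun M P L v => ?_⟩
  rw [hφ]
  simp only [Finset.mem_toList, Finset.mem_univ, true_and, hg]
  constructor
  · rintro ⟨⟨t, ht⟩, rfl⟩
    exact ht
  · intro h
    exact ⟨⟨_, h⟩, rfl⟩

/-- candidates -/
def candSet {Λ M : Type} (P : M → M → Prop) (L : Λ → M → Prop) (l h : ℕ) (S : Set Λ)
    (x : M) : Set M :=
  {y | l ≤ lcdN P x y ∧ lcdN P y y = h ∧ {c | L c y} = S}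

/-- new labels -/
abbrev NewLab (Λ : Type) (d k : ℕ) : Type :=
  Λ ⊕ (Fin (d + 1) × Fin (d + 1) × Set Λ × Fin (k + 1) × Fin (d + 1))

/-- new labeling -/
def newL {Λ M : Type} {d k : ℕ} (P : M → M → Prop) (L : Λ → M → Prop)
    (w : ℕ → Set M → Fin (k + 1) → M) : NewLab Λ d k → M → Prop
  | .inl c, x => L c x
  | .inr (l, h, S, i, m), x => (candSet P L l h S x).Nonempty ∧
      lcdN P x (w l (candSet P L l h S x) i) = m

/-- good witness function -/
def GoodW {M : Type} {k : ℕ} (P : M → M → Prop) (w : ℕ → Set M → Fin (k + 1) → M) : Prop :=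
  ∀ l (Y : Set M), Y.Nonempty → (∀ i, w l Y i ∈ Y) ∧ ∀ y ∈ Y, ∀ v : Fin k → M,
      (∀ j, lcdN P y (v j) ≤ l) → ∃ i, ∀ j, lcdN P (w l Y i) (v j) ≤ l

theorem transfer {Λ : Type} {d k : ℕ} (hk : 1 ≤ k) (ψ : LcdReduced Λ d (k + 1))
    {M M' : Type} [Finite M] [Finite M'] {P : M → M → Prop} {P' : M' → M' → Prop}
    {L : Λ → M → Prop} {L' : Λ → M' → Prop}
    (hP : IsForestParentDepthLE P d) (hP' : IsForestParentDepthLE P' d)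
    {w : ℕ → Set M → Fin (k + 1) → M} {w' : ℕ → Set M' → Fin (k + 1) → M'}
    (hw : GoodW P w) (hw' : GoodW P' w') {v : Fin k → M} {v' : Fin k → M'}
    (hl : ∀ (c : NewLab Λ d k) i, newL P L w c (v i) ↔ newL P' L' w' c (v' i))
    (hd : ∀ i j, lcdN P (v i) (v j) = lcdN P' (v' i) (v' j))
    (y : M) (hy : ψ.Realize P L (Fin.snoc v y)) :
    ∃ y' : M', ψ.Realize P' L' (Fin.snoc v' y') := by
  haveI : Nonempty (Fin k) := ⟨⟨0, hk⟩⟩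
  obtain ⟨j0, hj0⟩ := Finite.exists_max (fun j => lcdN P (v j) y)
  obtain ⟨l, hle⟩ : ∃ l, l = lcdN P (v j0) y := ⟨_, rfl⟩
  obtain ⟨h, hhe⟩ : ∃ h, h = lcdN P y y := ⟨_, rfl⟩
  obtain ⟨S, hS⟩ : ∃ S, S = {c | L c y} := ⟨_, rfl⟩
  have hld : l < d + 1 := by rw [hle]; exact Nat.lt_succ_of_le (lcdN_le hP _ _)
  have hhd : h < d + 1 := by rw [hhe]; exact Nat.lt_succ_of_le (lcdN_le hP _ _)
  have hyY : y ∈ candSet P L l h S (v j0) := ⟨hle.le, hhe.symm, hS.symm⟩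
  obtain ⟨hwm, hwc⟩ := hw l _ ⟨y, hyY⟩
  obtain ⟨i, hi⟩ := hwc y hyY v (fun j => by rw [lcdN_comm, hle]; exact hj0 j)
  set z := w l (candSet P L l h S (v j0)) i with hz
  have hzY : z ∈ candSet P L l h S (v j0) := hwm i
  -- equality of candidate sets
  have hcand : ∀ {M : Type} [Finite M] {P : M → M → Prop} {L : Λ → M → Prop},
      IsForestParentDepthLE P d → ∀ a b : M, l ≤ lcdN P a b →
      candSet P L l h S a = candSet P L l h S b := by
    intro M _ P L hP a b hab
    ext t
    simp only [candSet, Set.mem_setOf_eq]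
    have h1 := lcdN_ultra hP b a t
    have h2 := lcdN_ultra hP a b t
    rw [lcdN_comm P b a] at h1
    constructor <;> rintro ⟨q, r⟩ <;> refine ⟨?_, r⟩ <;> omega
  have hiso : ∀ {M : Type} [Finite M] {P : M → M → Prop},
      IsForestParentDepthLE P d → ∀ a b t : M, l ≤ lcdN P a t → lcdN P a b < l →
      lcdN P b t = lcdN P a b := by
    intro M _ P hP a b t h1 h2
    have h3 := lcdN_ultra hP b a t
    have h4 := lcdN_ultra hP a t b
    rw [lcdN_comm P b a] at h3
    rw [lcdN_comm P t b] at h4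
    omega
  -- same type of y and z over v
  have hzy : ∀ j, lcdN P (v j) z = lcdN P (v j) y := by
    intro j
    by_cases hj : l ≤ lcdN P (v j0) (v j)
    · have h1 := lcdN_ultra hP (v j) (v j0) z
      have h2 := lcdN_ultra hP (v j) (v j0) y
      have h3 := hi j
      have h4 := hj0 j
      have h5 := hzY.1
      rw [lcdN_comm P (v j) (v j0)] at h1 h2
      rw [lcdN_comm P z] at h3
      omega
    · rw [hiso hP _ _ z hzY.1 (by omega), hiso hP _ _ y hyY.1 (by omega)]
  -- transfer of labels
  have hlab : ∀ j, l ≤ lcdN P (v j0) (v j) →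
      (candSet P' L' l h S (v' j)).Nonempty ∧
      lcdN P' (v' j) (w' l (candSet P' L' l h S (v' j)) i) = lcdN P (v j) z := by
    intro j hj
    have := (hl (.inr (⟨l, hld⟩, ⟨h, hhd⟩, S, i,
      ⟨lcdN P (v j) z, Nat.lt_succ_of_le (lcdN_le hP _ _)⟩)) j).1
    simp only [newL] at this
    apply this
    rw [← hcand hP _ _ hj]
    exact ⟨⟨y, hyY⟩, rfl⟩
  have hself : l ≤ lcdN P (v j0) (v j0) := by rw [hle]; exact lcdN_le_self _ _
  obtain ⟨hne, -⟩ := hlab j0 hself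
  have hz'Y := (hw' l _ hne).1 i
  refine ⟨w' l (candSet P' L' l h S (v' j0)) i, ?_⟩
  set z' := w' l (candSet P' L' l h S (v' j0)) i with hz'
  have hdz : ∀ j, lcdN P (v j) y = lcdN P' (v' j) z' := by
    intro j
    rw [← hzy]
    by_cases hj : l ≤ lcdN P (v j0) (v j)
    · rw [← (hlab j hj).2, hz', hcand hP' (v' j0) (v' j) (by rw [← hd]; exact hj)]
    · rw [hiso hP _ _ z hzY.1 (by omega),
        hiso hP' _ _ z' hz'Y.1 (by rw [← hd]; omega), hd]
  refine (realize_congr ?_ ?_ ψ).1 hy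
  · intro c a
    refine Fin.lastCases ?_ (fun a => ?_) a
    · simp only [Fin.snoc_last]
      have h1 : {c | L c y} = {c | L' c z'} := by rw [← hS, hz'Y.2.2]
      exact Set.ext_iff.1 h1 c
    · simp only [Fin.snoc_castSucc]
      exact hl (.inl c) a
  · intro a b
    refine Fin.lastCases ?_ (fun a => ?_) a <;> refine Fin.lastCases ?_ (fun b => ?_) b
    · simp only [Fin.snoc_last]
      rw [← hhe, hz'Y.2.1]
    · simp only [Fin.snoc_last, Fin.snoc_castSucc]
      rw [lcdN_comm, lcdN_comm P']
      exact hdz b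
    · simp only [Fin.snoc_last, Fin.snoc_castSucc]
      exact hdz a
    · simp only [Fin.snoc_castSucc]
      exact hd a b


/-- Quantifier elimination on labeled forests of bounded depth: for `k ≥ 1` and an
lcd-reduced formula `ψ(x_1,…,x_k,y)` over `{parent} ∪ Λ`, there are a finite label set `Λ'`
and an lcd-reduced formula `φ'(x_1,…,x_k)` over `{parent} ∪ Λ'` such that every `Λ`-labeled
forest `𝕋` of depth at most `d` (universe `M`, parent relation `P`, labeling `L`) admits a
`Λ'`-relabeling `𝕊` (same universe, same parent relation, new labeling `L'`) with
`(∃y ψ)(𝕋) = φ'(𝕊)`: a `k`-tuple satisfies `∃y ψ` in `𝕋` iff it satisfies `φ'` in `𝕊`. -/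
theorem stmt17 (Λ : Type) [Fintype Λ] (d k : ℕ) (hk : 1 ≤ k)
    (ψ : LcdReduced Λ d (k + 1)) :
    ∃ (Λ' : Type) (_ : Fintype Λ') (φ' : LcdReduced Λ' d k),
      ∀ (M : Type) [Finite M] (P : M → M → Prop) (L : Λ → M → Prop),
        IsForestParentDepthLE P d →
          ∃ L' : Λ' → M → Prop,
            ∀ v : Fin k → M,
              (φ'.Realize P L' v ↔ ∃ y : M, ψ.Realize P L (Fin.snoc v y)) := by
  classical
  obtain ⟨φ, hφ⟩ := exists_formula (Λ := NewLab Λ d k) (d := d) hk (fun t =>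
    ∃ (M : Type) (_ : Finite M) (P : M → M → Prop) (L : Λ → M → Prop)
      (w : ℕ → Set M → Fin (k + 1) → M) (v : Fin k → M) (y : M),
      IsForestParentDepthLE P d ∧ GoodW P w ∧
      t = (fun a => a.toF.Realize P (newL P L w) v) ∧ ψ.Realize P L (Fin.snoc v y))
  refine ⟨NewLab Λ d k, Fintype.ofFinite _, φ, ?_⟩
  intro M _ P L hP
  rcases isEmpty_or_nonempty M with hM | hM
  · exact ⟨fun _ _ => False, fun v => (hM.false (v ⟨0, hk⟩)).elim⟩
  obtain ⟨w, hw⟩ : ∃ w : ℕ → Set M → Fin (k + 1) → M, GoodW P w := by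
    have : ∀ l (Y : Set M), ∃ w : Fin (k + 1) → M, Y.Nonempty → (∀ i, w i ∈ Y) ∧
        ∀ y ∈ Y, ∀ v : Fin k → M,
        (∀ j, lcdN P y (v j) ≤ l) → ∃ i, ∀ j, lcdN P (w i) (v j) ≤ l := by
      intro l Y
      by_cases hY : Y.Nonempty
      · obtain ⟨w, hw⟩ := exists_wit (lcdN P) (lcdN_comm P) (lcdN_ultra hP) k l Y hY
        exact ⟨w, fun _ => hw⟩
      · exact ⟨fun _ => Classical.arbitrary M, fun h => absurd h hY⟩
    choose w hw using this
    exact ⟨w, hw⟩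
  refine ⟨newL P L w, fun v => ?_⟩
  rw [hφ]
  constructor
  · rintro ⟨M₁, _, P₁, L₁, w₁, v₁, y₁, hP₁, hw₁, ht, hy₁⟩
    refine transfer hk ψ hP₁ hP hw₁ hw ?_ ?_ y₁ hy₁
    · intro c i
      exact (congrFun ht (.inl (c, i))).symm.to_iff
    · intro i j
      have h1 := (congrFun ht (.inr (⟨lcdN P₁ (v₁ i) (v₁ j),
        Nat.lt_succ_of_le (lcdN_le hP₁ _ _)⟩, i, j))).symm.to_iff
      exact (h1.1 rfl).symm
  · rintro ⟨y, hy⟩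
    exact ⟨M, inferInstance, P, L, w, v, y, hP, hw, rfl, hy⟩
end
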